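/- For every positive integer n, the following identity holds in the formal power series ring ℚ[[x_1, …, x_n, t, v]]: ∑_λ f_λ(t,v) · det((x_i^{λ_j + n − j})_{1≤i,j≤n}) · ∏_{i=1}^n (1 − t x_i)(1 − v x_i) · ∏_{1 ≤ i < j ≤ n} (1 − x_i x_j) = ∏_{1 ≤ i < j ≤ n} (x_i − x_j), where the sum is over all partitions λ = (λ_1 ≥ ⋯ ≥ λ_n ≥ 0) with at most n parts (the family is summable, since for each monomial only finitely many λ contribute). Equivalently (Ishikawa–Wakayama): ∑_λ f_λ(t,v) s_λ(x_1,…,x_n) = ∏_{i=1}^n 1/((1 − t x_i)(1 − v x_i)) · ∏_{1 ≤ i < j ≤ n} 1/(1 − x_i x_j). -/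

import Mathlib

/-- The power series ring `ℚ[[x_1,…,x_n,t,v]]`, with the variables indexed by
`Fin n ⊕ Fin 2` (`Sum.inl i` is `x_i`; `Sum.inr 0` is `t`; `Sum.inr 1` is `v`). -/
abbrev IWRing (n : ℕ) := MvPowerSeries (Fin n ⊕ Fin 2) ℚ

/-- The variable `x_i`. -/
noncomputable def IWx (n : ℕ) (i : Fin n) : IWRing n := MvPowerSeries.X (Sum.inl i)

/-- The variable `t`. -/
noncomputable def IWt (n : ℕ) : IWRing n := MvPowerSeries.X (Sum.inr 0)

/-- The variable `v`. -/
noncomputable def IWv (n : ℕ) : IWRing n := MvPowerSeries.X (Sum.inr 1)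

/-- The number `a_j = λ_j - λ_{j+1}` of columns of `λ` of length `j` (with
`λ_{n+1} = 0`), for a partition encoded as an antitone function `l : Fin n → ℕ`
(0-indexed, so `a_j` for the 1-indexed `j` is `IWa n l ⟨j-1,_⟩`). -/
def IWa (n : ℕ) (l : Fin n → ℕ) (j : Fin n) : ℕ :=
  l j - (if h : (j : ℕ) + 1 < n then l ⟨(j : ℕ) + 1, h⟩ else 0)

/-- The polynomial `f_λ(t,v) = ∏_{j odd} ∑_{r=0}^{a_j} t^r v^{a_j-r}
· ∏_{j even} ∑_{r=0}^{a_j} (tv)^r`, the 1-indexed column length `j` corresponding to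
the 0-indexed `j' : Fin n` with `j = j' + 1`. -/
noncomputable def IWf (n : ℕ) (l : Fin n → ℕ) : IWRing n :=
  ∏ j : Fin n,
    if Odd ((j : ℕ) + 1) then
      ∑ r ∈ Finset.range (IWa n l j + 1), IWt n ^ r * IWv n ^ (IWa n l j - r)
    else
      ∑ r ∈ Finset.range (IWa n l j + 1), (IWt n * IWv n) ^ r

/-!
Split off the columns of full length `n + 1` from a partition and expand the bialternant along its
last column. The minors are bialternants in `n` of the variables, so by induction everything reduces
to a linear relation between the Vandermonde minors. Interpolation at the nodes `x_k` by a
polynomial `G` of degree at most `n` evaluates `∑ k, cofactor k * G (x_k)` as `G 0` times the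
Vandermonde determinant. The `G` that is needed takes the value
`(1 - t x_k) (1 - v x_k) ∏ (1 - x_i x_k) / (1 - x_k ^ 2)` at `x_k`. Since
`1 - x_i X ≡ X (X - x_i)` modulo `X ^ 2 - 1`, subtracting an explicit multiple of `∏ (X - x_i)` from
`(1 - t X) (1 - v X) ∏ (1 - x_i X)` makes it divisible by `1 - X ^ 2`, and the quotient is `G`. Its
value at `0` is the inverse of the generating function of the weights of the full columns.
-/

/-- Partitions with at most `n` parts, in the encoding of `ishikawa_wakayama`. -/
abbrev BoundedPartition (n : ℕ) := {l : Fin n → ℕ // ∀ i j : Fin n, i ≤ j → l j ≤ l i}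

namespace BoundedPartition

/-- A partition with at most `n + 1` parts amounts to the partition with at most `n` parts left
after removing its columns of length `n + 1`, together with the number of these columns. -/
def succEquiv (n : ℕ) : BoundedPartition (n + 1) ≃ BoundedPartition n × ℕ where
  toFun l := (⟨fun j => l.1 j.castSucc - l.1 (Fin.last n), fun i j hij =>
    Nat.sub_le_sub_right (l.2 _ _ (Fin.castSucc_le_castSucc_iff.mpr hij)) _⟩, l.1 (Fin.last n))
  invFun p := ⟨Fin.snoc (α := fun _ => ℕ) (fun j => p.1.1 j + p.2) p.2, fun i j hij => by
    induction j using Fin.lastCases with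
    | last => induction i using Fin.lastCases <;> simp
    | cast j =>
      induction i using Fin.lastCases with
      | last => exact absurd hij (Fin.castSucc_lt_last j).not_ge
      | cast i => simpa using p.1.2 i j (Fin.castSucc_le_castSucc_iff.mp hij)⟩
  left_inv l := by
    ext j
    induction j using Fin.lastCases with
    | last => simp
    | cast j => simpa using Nat.sub_add_cancel (l.2 _ _ (Fin.le_last j.castSucc))
  right_inv p := by ext <;> simp

variable {n : ℕ} (l : BoundedPartition n) (b : ℕ)

@[simp]
theorem succEquiv_symm_castSucc (j : Fin n) :
    ((succEquiv n).symm (l, b)).1 j.castSucc = l.1 j + b := by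
  simp [succEquiv]

@[simp]
theorem succEquiv_symm_last : ((succEquiv n).symm (l, b)).1 (Fin.last n) = b := by
  simp [succEquiv]

theorem IWa_succEquiv_symm_castSucc (j : Fin n) :
    IWa (n + 1) ((succEquiv n).symm (l, b)).1 j.castSucc = IWa n l.1 j := by
  have hj : (j : ℕ) + 1 < n + 1 := by omega
  simp only [IWa, succEquiv_symm_castSucc, Fin.val_castSucc, dif_pos hj]
  by_cases h : (j : ℕ) + 1 < n
  · have hnext : (⟨j + 1, hj⟩ : Fin (n + 1)) = Fin.castSucc ⟨j + 1, h⟩ := rfl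
    rw [dif_pos h, hnext, succEquiv_symm_castSucc, Nat.add_sub_add_right]
  · have hnext : (⟨j + 1, hj⟩ : Fin (n + 1)) = Fin.last n := Fin.ext (by rw [Fin.val_last]; lia)
    rw [dif_neg h, hnext, succEquiv_symm_last, Nat.add_sub_cancel, Nat.sub_zero]

theorem IWa_succEquiv_symm_last :
    IWa (n + 1) ((succEquiv n).symm (l, b)).1 (Fin.last n) = b := by
  simp [IWa]

end BoundedPartition

section Weight

variable {R : Type*} [CommRing R] (t v : R) {n : ℕ}

/-- The factor of `f_λ` contributed by `a` columns of length `j`. -/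
def columnWeight (j a : ℕ) : R :=
  if Odd j then ∑ r ∈ Finset.range (a + 1), t ^ r * v ^ (a - r)
  else ∑ r ∈ Finset.range (a + 1), (t * v) ^ r

/-- The inverse of the generating function `∑ a, columnWeight t v j a * y ^ a`. -/
def columnDenominator (j : ℕ) (y : R) : R :=
  if Odd j then (1 - t * y) * (1 - v * y) else (1 - t * v * y) * (1 - y)

/-- The weight `f_λ`, evaluated at elements `t`, `v` of an arbitrary commutative ring. -/
def partitionWeight (l : Fin n → ℕ) : R :=
  ∏ j : Fin n, columnWeight t v ((j : ℕ) + 1) (IWa n l j)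

theorem partitionWeight_succEquiv_symm (l : BoundedPartition n) (b : ℕ) :
    partitionWeight t v ((BoundedPartition.succEquiv n).symm (l, b)).1 =
      partitionWeight t v l.1 * columnWeight t v (n + 1) b := by
  simp only [partitionWeight, Fin.prod_univ_castSucc, Fin.val_castSucc, Fin.val_last,
    BoundedPartition.IWa_succEquiv_symm_castSucc, BoundedPartition.IWa_succEquiv_symm_last]

end Weight

section Bialternant

variable {R : Type*} [CommRing R] {n : ℕ}

/-- The bialternant numerator `det (x_i ^ (λ_j + n - j))` of the Schur function `s_λ`. -/
def bialternant (x : Fin n → R) (l : Fin n → ℕ) : R :=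
  Matrix.det (Matrix.of fun i j : Fin n => x i ^ (l j + (n - 1 - (j : ℕ))))

theorem projVandermonde_one_apply (x : Fin n → R) (i j : Fin n) :
    Matrix.projVandermonde 1 x i j = x i ^ (n - 1 - (j : ℕ)) := by
  rw [Matrix.projVandermonde_apply, Pi.one_apply, one_pow, one_mul, Fin.val_rev, Nat.sub_add_eq,
    Nat.sub_right_comm]

theorem det_projVandermonde_one (x : Fin n → R) :
    (Matrix.projVandermonde 1 x).det = ∏ i, ∏ j ∈ Finset.Ioi i, (x i - x j) := by
  simp [Matrix.det_projVandermonde]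

theorem bialternant_zero (x : Fin n → R) :
    bialternant x 0 = ∏ i, ∏ j ∈ Finset.Ioi i, (x i - x j) := by
  rw [← det_projVandermonde_one, bialternant]
  congr 1
  ext i j
  simp [projVandermonde_one_apply]

/-- The cofactor of the entry `(k, n)` in a matrix of size `n + 1` whose first `n` columns are
`x_i ^ (l_j + n - j)`. -/
def bialternantCofactor (x : Fin (n + 1) → R) (l : Fin n → ℕ) (k : Fin (n + 1)) : R :=
  (-1) ^ ((k : ℕ) + n) *
    ((∏ i, x (k.succAbove i)) * bialternant (fun i => x (k.succAbove i)) l)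

theorem det_eq_sum_bialternantCofactor (A : Matrix (Fin (n + 1)) (Fin (n + 1)) R)
    (x : Fin (n + 1) → R) (l : Fin n → ℕ)
    (hA : ∀ i (j : Fin n), A i j.castSucc = x i ^ (l j + (n - (j : ℕ)))) :
    A.det = ∑ k, bialternantCofactor x l k * A k (Fin.last n) := by
  rw [Matrix.det_succ_column A (Fin.last n)]
  refine Finset.sum_congr rfl fun k _ => ?_
  have hminor : A.submatrix k.succAbove (Fin.last n).succAbove =
      Matrix.of fun i j => x (k.succAbove i) *
        (Matrix.of fun i j : Fin n => x (k.succAbove i) ^ (l j + (n - 1 - (j : ℕ)))) i j := by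
    ext i j
    rw [Matrix.submatrix_apply, Fin.succAbove_last, hA, Matrix.of_apply, Matrix.of_apply,
      ← pow_succ']
    congr 1
    omega
  rw [hminor, Matrix.det_mul_column, bialternantCofactor, bialternant, Fin.val_last]
  ring

theorem bialternant_succEquiv_symm (x : Fin (n + 1) → R) (l : BoundedPartition n) (b : ℕ) :
    bialternant x ((BoundedPartition.succEquiv n).symm (l, b)).1 =
      (∑ k, bialternantCofactor x l.1 k) * (∏ i, x i) ^ b := by
  let A : Matrix (Fin (n + 1)) (Fin (n + 1)) R :=
    Matrix.of fun i => Fin.snoc (fun j : Fin n => x i ^ (l.1 j + (n - (j : ℕ)))) 1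
  have hcol : (Matrix.of fun i j : Fin (n + 1) => x i ^
      (((BoundedPartition.succEquiv n).symm (l, b)).1 j + (n + 1 - 1 - (j : ℕ)))) =
      Matrix.of fun i j => x i ^ b * A i j := by
    ext i j
    induction j using Fin.lastCases with
    | last => simp [A]
    | cast j => simp [A, ← pow_add, add_left_comm, add_assoc]
  rw [bialternant, hcol, Matrix.det_mul_column, Finset.prod_pow, mul_comm,
    det_eq_sum_bialternantCofactor A x l.1 fun i j => by simp [A]]
  simp [A]

open Polynomial in
theorem sum_bialternantCofactor_zero_mul_eval (x : Fin (n + 1) → R) {G : R[X]}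
    (hG : G.natDegree ≤ n) :
    ∑ k, bialternantCofactor x 0 k * G.eval (x k) =
      G.coeff 0 * ∏ i, ∏ j ∈ Finset.Ioi i, (x i - x j) := by
  have heval : ∀ k, G.eval (x k) =
      ∑ j : Fin (n + 1), G.coeff (j.rev : ℕ) • Matrix.projVandermonde 1 x k j := by
    intro k
    rw [eval_eq_sum_range' (Nat.lt_succ_of_le hG), Finset.sum_range,
      ← Equiv.sum_comp Fin.revPerm]
    simp [Matrix.projVandermonde_apply]
  have hdet := Matrix.det_updateCol_sum (Matrix.projVandermonde 1 x) (Fin.last n)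
    fun j => G.coeff (j.rev : ℕ)
  rw [Fin.rev_last, Fin.val_zero, smul_eq_mul, det_projVandermonde_one] at hdet
  rw [← hdet, det_eq_sum_bialternantCofactor _ x 0 fun i j => ?_]
  · simp only [Matrix.updateCol_self, heval]
  · rw [Matrix.updateCol_ne (Fin.castSucc_lt_last j).ne, projVandermonde_one_apply]
    simp

end Bialternant

section Interpolation

open Polynomial

variable {R : Type*} [CommRing R] {ι : Type*} (t v : R)

theorem X_sq_sub_one_dvd_prod_one_sub_sub (s : Finset ι) (x : ι → R) :
    (X ^ 2 - 1 : R[X]) ∣ ∏ i ∈ s, (1 - C (x i) * X) - X ^ s.card * ∏ i ∈ s, (X - C (x i)) := by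
  rw [← Finset.prod_const, ← Finset.prod_mul_distrib, ← Ideal.mem_span_singleton,
    ← SModEq.sub_mem]
  refine SModEq.prod fun i _ => ?_
  rw [SModEq.sub_mem, Ideal.mem_span_singleton]
  exact ⟨-1, by ring⟩

/-- The remainder of `(1 - t X) (1 - v X) X ^ N` modulo `X ^ 2 - 1`. -/
noncomputable def quadraticRemainder (N : ℕ) : R[X] :=
  if Odd N then C (1 + t * v) * X - C (t + v) else C (1 + t * v) - C (t + v) * X

theorem X_sq_sub_one_dvd_sub_quadraticRemainder (N : ℕ) :
    (X ^ 2 - 1 : R[X]) ∣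
      (1 - C t * X) * (1 - C v * X) * X ^ N - quadraticRemainder t v N := by
  have hpow : ∀ m, (X ^ 2 - 1 : R[X]) ∣ X ^ (2 * m) - 1 := fun m => by
    simpa [pow_mul] using sub_dvd_pow_sub_pow (X ^ 2 : R[X]) 1 m
  rw [quadraticRemainder]
  split_ifs with hN
  · obtain ⟨m, rfl⟩ := hN
    obtain ⟨q, hq⟩ := hpow m
    refine ⟨(1 - C t * X) * (1 - C v * X) * X * q + C t * C v * X - C t - C v, ?_⟩
    simp only [C_add, C_mul, C_1]
    linear_combination (1 - C t * X) * (1 - C v * X) * X * hq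
  · obtain ⟨m, rfl⟩ := (Nat.not_odd_iff_even.mp hN).two_dvd
    obtain ⟨q, hq⟩ := hpow m
    refine ⟨(1 - C t * X) * (1 - C v * X) * q + C t * C v, ?_⟩
    simp only [C_add, C_mul, C_1]
    linear_combination (1 - C t * X) * (1 - C v * X) * hq

variable [Fintype ι] (x : ι → R)

/-- The polynomial `(1 - t X) (1 - v X) ∏ (1 - x_i X)`, corrected by the multiple of `∏ (X - x_i)`
which makes it divisible by `X ^ 2 - 1` and cancels its coefficient of degree `card ι + 2`. -/
noncomputable def correctedNumerator : R[X] :=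
  (1 - C t * X) * (1 - C v * X) * ∏ i, (1 - C (x i) * X) -
    (quadraticRemainder t v (Fintype.card ι) +
      C ((-1) ^ Fintype.card ι * (t * v * ∏ i, x i)) * (X ^ 2 - 1)) * ∏ i, (X - C (x i))

theorem X_sq_sub_one_dvd_correctedNumerator :
    (X ^ 2 - 1 : R[X]) ∣ correctedNumerator t v x := by
  obtain ⟨p, hp⟩ := X_sq_sub_one_dvd_prod_one_sub_sub Finset.univ x
  obtain ⟨q, hq⟩ := X_sq_sub_one_dvd_sub_quadraticRemainder t v (Fintype.card ι)
  rw [Finset.card_univ] at hp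
  refine ⟨(1 - C t * X) * (1 - C v * X) * p + (q -
    C ((-1) ^ Fintype.card ι * (t * v * ∏ i, x i))) * ∏ i, (X - C (x i)), ?_⟩
  rw [correctedNumerator]
  linear_combination (1 - C t * X) * (1 - C v * X) * hp + (∏ i, (X - C (x i))) * hq

theorem natDegree_prod_le_card {p : ι → R[X]} (hp : ∀ i, (p i).natDegree ≤ 1) :
    (∏ i, p i).natDegree ≤ Fintype.card ι :=
  (natDegree_prod_le _ _).trans ((Finset.sum_le_card_nsmul _ _ 1 fun i _ => hp i).trans_eq
    (by rw [Finset.card_univ, smul_eq_mul, mul_one]))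

theorem coeff_card_prod {p : ι → R[X]} (hp : ∀ i, (p i).natDegree ≤ 1) :
    (∏ i, p i).coeff (Fintype.card ι) = ∏ i, (p i).coeff 1 := by
  simpa using coeff_prod_of_natDegree_le Finset.univ p 1 fun i _ => hp i

theorem natDegree_correctedNumerator_le :
    (correctedNumerator t v x).natDegree ≤ Fintype.card ι + 1 := by
  have hlin : ∀ a : R, (1 - C a * X).natDegree ≤ 1 := fun a => by compute_degree
  have hroot : ∀ i, (X - C (x i)).natDegree ≤ 1 := fun i => natDegree_X_sub_C_le _
  have hlin_coeff : ∀ a : R, (1 - C a * X).coeff 1 = -a := fun a => by simp [coeff_one]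
  have hroot_coeff : ∀ i, (X - C (x i)).coeff 1 = 1 := fun i => by simp
  have hquad : ((1 - C t * X) * (1 - C v * X)).natDegree ≤ 2 := by compute_degree
  have hcorr : ∀ c : R,
      (quadraticRemainder t v (Fintype.card ι) + C c * (X ^ 2 - 1)).natDegree ≤ 2 := fun c => by
    rw [quadraticRemainder]
    split_ifs <;> compute_degree
  have hcorr_coeff : ∀ c : R,
      (quadraticRemainder t v (Fintype.card ι) + C c * (X ^ 2 - 1)).coeff 2 = c := fun c => by
    rw [quadraticRemainder]
    split_ifs <;> simp [coeff_one, -map_add]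
  have hprod_lin := natDegree_prod_le_card fun i => hlin (x i)
  have hprod_root := natDegree_prod_le_card hroot
  rw [correctedNumerator, show Fintype.card ι + 1 = 2 + Fintype.card ι - 1 by omega]
  refine natDegree_le_pred ?_ ?_
  · rw [natDegree_sub_le_iff_left (natDegree_mul_le_of_le (hcorr _) hprod_root)]
    exact natDegree_mul_le_of_le hquad hprod_lin
  · rw [coeff_sub, coeff_mul_add_eq_of_natDegree_le hquad hprod_lin,
      coeff_mul_add_eq_of_natDegree_le (hcorr _) hprod_root,
      coeff_card_prod fun i => hlin (x i), coeff_card_prod hroot,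
      coeff_mul_add_eq_of_natDegree_le (df := 1) (dg := 1) (hlin t) (hlin v), hcorr_coeff]
    simp only [hlin_coeff, hroot_coeff, Finset.prod_neg, Finset.prod_const_one, Finset.card_univ]
    ring

theorem eval_correctedNumerator (i : ι) :
    (correctedNumerator t v x).eval (x i) =
      (1 - t * x i) * (1 - v * x i) * ∏ m, (1 - x m * x i) := by
  have hroot : ∏ m, (x i - x m) = 0 := Finset.prod_eq_zero (Finset.mem_univ i) (sub_self _)
  simp [correctedNumerator, eval_prod, hroot]

theorem eval_zero_correctedNumerator :
    (correctedNumerator t v x).eval 0 = columnDenominator t v (Fintype.card ι) (∏ i, x i) := by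
  have hnum : ((1 - C t * X) * (1 - C v * X) * ∏ i, (1 - C (x i) * X)).eval 0 = 1 := by
    simp [eval_prod]
  have hroot : (∏ i, (X - C (x i))).eval 0 = (-1) ^ Fintype.card ι * ∏ i, x i := by
    simp [eval_prod, Finset.prod_neg]
  rw [correctedNumerator, eval_sub, hnum, eval_mul, hroot, quadraticRemainder, columnDenominator]
  split_ifs with h
  · simp only [eval_add, eval_sub, eval_mul, eval_C, eval_X, eval_pow, eval_one, h.neg_one_pow]
    ring
  · simp only [eval_add, eval_sub, eval_mul, eval_C, eval_X, eval_pow, eval_one,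
      (Nat.not_odd_iff_even.mp h).neg_one_pow]
    ring

theorem exists_polynomial_one_sub_sq_mul_eval_eq :
    ∃ G : R[X], G.natDegree ≤ Fintype.card ι - 1 ∧
      G.coeff 0 = columnDenominator t v (Fintype.card ι) (∏ i, x i) ∧
      ∀ i, (1 - x i ^ 2) * G.eval (x i) =
        (1 - t * x i) * (1 - v * x i) * ∏ m, (1 - x m * x i) := by
  rcases subsingleton_or_nontrivial R with _ | _
  · exact ⟨0, by simp, Subsingleton.elim _ _, fun i => Subsingleton.elim _ _⟩
  have hmonic : (X ^ 2 - 1 : R[X]).Monic := monic_X_pow_sub_C 1 two_ne_zero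
  obtain ⟨Q, hQ⟩ := X_sq_sub_one_dvd_correctedNumerator t v x
  have hdeg : Q.natDegree ≤ Fintype.card ι - 1 := by
    have hquad : (X ^ 2 - 1 : R[X]).natDegree = 2 := natDegree_X_pow_sub_C
    rw [← mul_divByMonic_cancel_left Q hmonic, ← hQ, natDegree_divByMonic _ hmonic, hquad]
    exact Nat.sub_le_sub_right (natDegree_correctedNumerator_le t v x) 2
  have heval : ∀ z, (1 - z ^ 2) * (-Q).eval z = (correctedNumerator t v x).eval z := fun z => by
    rw [hQ, eval_neg, eval_mul, eval_sub, eval_pow, eval_X, eval_one]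
    ring
  refine ⟨-Q, (natDegree_neg Q).trans_le hdeg, ?_, fun i =>
    (heval _).trans (eval_correctedNumerator t v x i)⟩
  rw [coeff_zero_eq_eval_zero, ← eval_zero_correctedNumerator, ← heval]
  ring

end Interpolation

section Recursion

variable {R : Type*} [CommRing R] (t v : R) {n : ℕ}

theorem sum_bialternantCofactor_zero_mul (x : Fin (n + 1) → R)
    (hx : ∀ i, IsLeftRegular (1 - x i ^ 2)) :
    ∑ k, bialternantCofactor x 0 k * ((1 - t * x k) * (1 - v * x k) *
        ∏ i, (1 - x k * x (k.succAbove i))) =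
      columnDenominator t v (n + 1) (∏ i, x i) * ∏ i, ∏ j ∈ Finset.Ioi i, (x i - x j) := by
  obtain ⟨G, hdeg, hG, heval⟩ := exists_polynomial_one_sub_sq_mul_eval_eq t v x
  rw [Fintype.card_fin] at hdeg hG
  rw [← hG, ← sum_bialternantCofactor_zero_mul_eval x hdeg]
  refine Finset.sum_congr rfl fun k _ => congrArg _ (hx k ?_)
  change (1 - x k ^ 2) * _ = (1 - x k ^ 2) * _
  rw [heval, Fin.prod_univ_succAbove _ k]
  simp only [mul_comm (x k)]
  ring

/-- The factor by which the Ishikawa–Wakayama series is multiplied to clear denominators. -/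
def iwDenominator (x : Fin n → R) : R :=
  (∏ i, ((1 - t * x i) * (1 - v * x i))) * ∏ i, ∏ j ∈ Finset.Ioi i, (1 - x i * x j)

theorem prod_prod_Ioi_succAbove {M : Type*} [CommMonoid M] (g : Fin (n + 1) → Fin (n + 1) → M)
    (hg : ∀ i j, g i j = g j i) (k : Fin (n + 1)) :
    ∏ i, ∏ j ∈ Finset.Ioi i, g i j =
      (∏ j, g k (k.succAbove j)) *
        ∏ i, ∏ j ∈ Finset.Ioi i, g (k.succAbove i) (k.succAbove j) := by
  have prod_Ioi : ∀ {m : ℕ} (h : Fin m → Fin m → M),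
      ∏ i, ∏ j ∈ Finset.Ioi i, h i j = ∏ i, ∏ j, if i < j then h i j else 1 := fun h => by
    simp only [← Finset.filter_lt_eq_Ioi, Finset.prod_filter]
  simp only [prod_Ioi, Fin.prod_univ_succAbove _ k, lt_irrefl, if_false, one_mul,
    Fin.succAbove_lt_succAbove_iff, Finset.prod_mul_distrib, ← mul_assoc]
  rw [← Finset.prod_mul_distrib]
  congr 1
  refine Finset.prod_congr rfl fun j _ => ?_
  rcases lt_or_gt_of_ne (Fin.succAbove_ne k j) with h | h
  · simp [h, h.not_gt, hg k]
  · simp [h, h.not_gt]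

theorem iwDenominator_succAbove (x : Fin (n + 1) → R) (k : Fin (n + 1)) :
    iwDenominator t v x = (1 - t * x k) * (1 - v * x k) * (∏ i, (1 - x k * x (k.succAbove i))) *
      iwDenominator t v fun i => x (k.succAbove i) := by
  rw [iwDenominator, iwDenominator, Fin.prod_univ_succAbove _ k,
    prod_prod_Ioi_succAbove (fun i j => 1 - x i * x j) (fun i j => by rw [mul_comm]) k]
  ring

end Recursion

section Series

theorem nonarchimedeanRing_of_isLinearTopology {A : Type*} [Ring A] [TopologicalSpace A]
    [IsTopologicalRing A] [IsLinearTopology A A] : NonarchimedeanRing A where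
  is_nonarchimedean U hU := by
    obtain ⟨I, hI, hIU⟩ := IsLinearTopology.hasBasis_open_ideal.mem_iff.mp hU
    exact ⟨⟨I.toAddSubgroup, hI⟩, hIU⟩

variable {R : Type*} [CommRing R] [UniformSpace R] [IsUniformAddGroup R] [IsTopologicalRing R]
  [IsLinearTopology R R] [CompleteSpace R]

theorem summable_pow_of_isTopologicallyNilpotent {a : R} (ha : IsTopologicallyNilpotent a) :
    Summable (fun n : ℕ => a ^ n) := by
  have := nonarchimedeanRing_of_isLinearTopology (A := R)
  refine NonarchimedeanAddGroup.summable_of_tendsto_cofinite_zero ?_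
  rw [Nat.cofinite_eq_atTop]
  exact ha

variable [T2Space R]

theorem isUnit_one_sub_of_isTopologicallyNilpotent {a : R} (ha : IsTopologicallyNilpotent a) :
    IsUnit (1 - a) :=
  .of_mul_eq_one_right _ (summable_pow_of_isTopologicallyNilpotent ha).tsum_pow_mul_one_sub

theorem hasSum_sum_pow_mul_pow {y : R} (hy : IsTopologicallyNilpotent y) (α β : R) :
    ∃ U, HasSum (fun a : ℕ => (∑ r ∈ Finset.range (a + 1), α ^ r * β ^ (a - r)) * y ^ a) U ∧
      (1 - α * y) * (1 - β * y) * U = 1 := by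
  have := nonarchimedeanRing_of_isLinearTopology (A := R)
  have hα := summable_pow_of_isTopologicallyNilpotent (hy.mul_left α)
  have hβ := summable_pow_of_isTopologicallyNilpotent (hy.mul_left β)
  have hmul := hα.mul_of_nonarchimedean hβ
  refine ⟨(∑' i, (α * y) ^ i) * ∑' i, (β * y) ^ i, ?_, ?_⟩
  · rw [hα.tsum_mul_tsum_eq_tsum_sum_range hβ hmul]
    refine (summable_sum_mul_range_of_summable_mul hmul).hasSum.congr_fun fun a => ?_
    rw [Finset.sum_mul]
    refine Finset.sum_congr rfl fun r hr => ?_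
    rw [mul_pow, mul_pow, mul_mul_mul_comm, ← pow_add,
      Nat.add_sub_cancel' (Finset.mem_range_succ_iff.mp hr)]
  · rw [mul_comm, mul_mul_mul_comm, hα.tsum_pow_mul_one_sub, hβ.tsum_pow_mul_one_sub, one_mul]

variable (t v : R)

theorem hasSum_columnWeight {y : R} (hy : IsTopologicallyNilpotent y) (j : ℕ) :
    ∃ U, HasSum (fun a : ℕ => columnWeight t v j a * y ^ a) U ∧
      columnDenominator t v j y * U = 1 := by
  by_cases h : Odd j
  · simpa only [columnWeight, columnDenominator, if_pos h] using hasSum_sum_pow_mul_pow hy t v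
  · simpa only [columnWeight, columnDenominator, if_neg h, one_pow, mul_one, one_mul] using
      hasSum_sum_pow_mul_pow hy (t * v) 1

theorem hasSum_partitionWeight_mul_bialternant_succ {n : ℕ} {x : Fin (n + 1) → R}
    (hx : ∀ i, IsTopologicallyNilpotent (x i))
    (ih : ∀ k : Fin (n + 1), HasSum (fun l : BoundedPartition n => partitionWeight t v l.1 *
        bialternant (fun i => x (k.succAbove i)) l.1 *
          iwDenominator t v fun i => x (k.succAbove i))
      (bialternant (fun i => x (k.succAbove i)) 0)) :
    HasSum (fun l : BoundedPartition (n + 1) => partitionWeight t v l.1 * bialternant x l.1 *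
      iwDenominator t v x) (bialternant x 0) := by
  have := nonarchimedeanRing_of_isLinearTopology (A := R)
  let ratio : Fin (n + 1) → R := fun k =>
    (1 - t * x k) * (1 - v * x k) * ∏ i, (1 - x k * x (k.succAbove i))
  let coef : Fin (n + 1) → R := fun k => (-1) ^ ((k : ℕ) + n) * ∏ i, x (k.succAbove i)
  have hprod : IsTopologicallyNilpotent (∏ i, x i) := by
    rw [Fin.prod_univ_succ]
    exact (hx 0).mul_right _
  obtain ⟨U, hU, hUmul⟩ := hasSum_columnWeight t v hprod (n + 1)
  have hregular : ∀ i, IsLeftRegular (1 - x i ^ 2) := fun i =>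
    (isUnit_one_sub_of_isTopologicallyNilpotent
      (by rw [sq]; exact (hx i).mul_right _)).isRegular.left
  have hsum : ∑ k, coef k * ratio k * bialternant (fun i => x (k.succAbove i)) 0 =
      columnDenominator t v (n + 1) (∏ i, x i) * bialternant x 0 := by
    rw [bialternant_zero, ← sum_bialternantCofactor_zero_mul t v x hregular]
    refine Finset.sum_congr rfl fun k _ => ?_
    rw [bialternantCofactor]
    ring
  have h := (hasSum_sum (s := Finset.univ) fun k _ =>
    (ih k).mul_left (coef k * ratio k)).mul_of_nonarchimedean hU
  rw [hsum, mul_right_comm, hUmul, one_mul] at h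
  rw [← (BoundedPartition.succEquiv n).symm.hasSum_iff]
  refine h.congr_fun fun p => ?_
  rw [Function.comp_apply, partitionWeight_succEquiv_symm, bialternant_succEquiv_symm,
    Finset.sum_mul, Finset.mul_sum, Finset.sum_mul, Finset.sum_mul]
  refine Finset.sum_congr rfl fun k _ => ?_
  rw [iwDenominator_succAbove t v x k, bialternantCofactor]
  ring

theorem hasSum_partitionWeight_mul_bialternant {n : ℕ} (x : Fin n → R)
    (hx : ∀ i, IsTopologicallyNilpotent (x i)) :
    HasSum (fun l : BoundedPartition n => partitionWeight t v l.1 * bialternant x l.1 *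
      iwDenominator t v x) (bialternant x 0) := by
  induction n with
  | zero =>
    have : Unique (BoundedPartition 0) := uniqueOfSubsingleton ⟨0, fun i => i.elim0⟩
    convert hasSum_unique (β := BoundedPartition 0) _ using 1
    simp [partitionWeight, bialternant, iwDenominator]
  | succ n ih =>
    exact hasSum_partitionWeight_mul_bialternant_succ t v hx fun k => ih _ fun i => hx _

theorem ishikawa_wakayama_general {n : ℕ} (x : Fin n → R)
    (hx : ∀ i, IsTopologicallyNilpotent (x i)) :
    HasSum
      (fun l : BoundedPartition n => partitionWeight t v l.1 * bialternant x l.1 *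
        (∏ i, ((1 - t * x i) * (1 - v * x i))) * ∏ i, ∏ j ∈ Finset.Ioi i, (1 - x i * x j))
      (∏ i, ∏ j ∈ Finset.Ioi i, (x i - x j)) := by
  simpa only [iwDenominator, ← mul_assoc, bialternant_zero] using
    hasSum_partitionWeight_mul_bialternant t v x hx

end Series

/-- **Ishikawa–Wakayama** (Theorem IV), with denominators cleared:
`∑_λ f_λ(t,v) det(x_i^{λ_j+n-j}) ∏_i (1-t x_i)(1-v x_i) ∏_{i<j} (1-x_i x_j)
 = ∏_{i<j} (x_i - x_j)` as a convergent sum in `ℚ[[x_1,…,x_n,t,v]]` (with the product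
topology coming from the discrete topology on the coefficients).  Partitions with at
most `n` parts are encoded as antitone functions `Fin n → ℕ`; with 0-indexed `j`, the
exponent `λ_j + n - j` becomes `l j + (n - 1 - j)`. -/
theorem ishikawa_wakayama (n : ℕ) (hn : 0 < n) :
    letI : TopologicalSpace ℚ := ⊥
    letI : TopologicalSpace (IWRing n) :=
      inferInstanceAs (TopologicalSpace ((Fin n ⊕ Fin 2 →₀ ℕ) → ℚ))
    HasSum
      (fun l : {l : Fin n → ℕ // ∀ i j : Fin n, i ≤ j → l j ≤ l i} =>
        IWf n l.1 *
          Matrix.det (Matrix.of fun i j : Fin n =>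
            IWx n i ^ (l.1 j + (n - 1 - (j : ℕ)))) *
          (∏ i : Fin n, ((1 - IWt n * IWx n i) * (1 - IWv n * IWx n i))) *
          ∏ i : Fin n, ∏ j ∈ Finset.Ioi i, (1 - IWx n i * IWx n j))
      (∏ i : Fin n, ∏ j ∈ Finset.Ioi i, (IWx n i - IWx n j)) := by
  let _ : UniformSpace ℚ := ⊥
  have : DiscreteUniformity ℚ := ⟨rfl⟩
  open scoped MvPowerSeries.WithPiTopology in
  exact ishikawa_wakayama_general (IWt n) (IWv n) (IWx n) fun i =>
    MvPowerSeries.WithPiTopology.isTopologicallyNilpotent_of_constantCoeff_zero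
      (MvPowerSeries.constantCoeff_X _)
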